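/- Let E₂(q) = 1 − 24 Σ_{n=1}^∞ σ₁(n) qⁿ and F(q) = ∏_{n=1}^∞ (1 − qⁿ). Then for every complex number q with |q| < 1, one has 3 E₂(q²) − E₂(q) − 2 E₂(q⁴) = 24 q · F(q⁴)⁸ / F(q²)⁴. -/

import Mathlib

open scoped BigOperators

/-- The weight-2 Eisenstein series `E₂(q) = 1 − 24 Σ_{n=1}^∞ σ₁(n) qⁿ`. -/
noncomputable def E2 (q : ℂ) : ℂ :=
  1 - 24 * ∑' n : ℕ, (ArithmeticFunction.sigma 1 (n + 1) : ℂ) * q ^ (n + 1)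

/-- The Euler product `F(q) = ∏_{n=1}^∞ (1 − qⁿ)`. -/
noncomputable def eulerF (q : ℂ) : ℂ := ∏' n : ℕ, (1 - q ^ (n + 1))

/-!
Put `q = e^{πiτ}`, so that `T : τ ↦ τ + 1` acts by `q ↦ -q`. The functions

* `f(q) = E₂(-q) - E₂(q) - 3 θ₂⁴`,
* `g(q) = 4 E₂(q⁴) - E₂(-q) - 3 θ₄⁴`,
* `h(q) = -g(-q)`

vanish at `q = 0`, and up to a common sign `-1` they are permuted by the weight 2 actions of `S` and
`T`. Hence `(f + g + h)²`, `f² + g² + h²` and `(f - g)(g - h)(h - f)` are level one cusp forms, of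
weights 4, 4 and 6. There are no nonzero ones below weight 12, so all three vanish, which forces
`f = 0`. The Hecke relation `E₂(q) + E₂(-q) + 4 E₂(q⁴) = 6 E₂(q²)` holds for the same reason: the
difference of its sides is a level one cusp form of weight 2. It turns
`3 E₂(q²) - E₂(q) - 2 E₂(q⁴)` into `(E₂(-q) - E₂(q)) / 2 = 3 θ₂⁴ / 2`.
-/

open Complex Filter Metric ModularForm Topology
open UpperHalfPlane hiding I
open scoped Manifold MatrixGroups Real

local notation "𝕢" => Function.Periodic.qParam

lemma differentiableOn_comp_neg {f : ℂ → ℂ} (hf : DifferentiableOn ℂ f (ball 0 1)) :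
    DifferentiableOn ℂ (fun q ↦ f (-q)) (ball 0 1) :=
  hf.comp differentiableOn_id.neg fun q hq ↦ by simpa using hq

lemma differentiableOn_comp_pow {f : ℂ → ℂ} (hf : DifferentiableOn ℂ f (ball 0 1)) {n : ℕ}
    (hn : n ≠ 0) : DifferentiableOn ℂ (fun q ↦ f (q ^ n)) (ball 0 1) :=
  hf.comp (differentiableOn_pow n) fun q hq ↦ by
    simpa using pow_lt_one₀ (norm_nonneg q) (by simpa using hq) hn

lemma E2_zero : E2 0 = 1 := by simp [E2]

lemma differentiableOn_E2 : DifferentiableOn ℂ E2 (ball 0 1) := by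
  intro q hq
  obtain ⟨r, hqr, hr⟩ := exists_between (mem_ball_zero_iff.mp hq)
  have hr0 : 0 ≤ r := (norm_nonneg q).trans hqr.le
  have summable_bound : Summable fun n : ℕ ↦ ((n + 1 : ℕ) : ℝ) ^ 2 * r ^ (n + 1) :=
    (summable_nat_add_iff (f := fun n : ℕ ↦ (n : ℝ) ^ 2 * r ^ n) 1).mpr <|
      summable_pow_mul_geometric_of_norm_lt_one 2 (by rwa [Real.norm_of_nonneg hr0])
  have differentiableOn_tsum := differentiableOn_tsum_of_summable_norm
    (F := fun n (w : ℂ) ↦ (ArithmeticFunction.sigma 1 (n + 1) : ℂ) * w ^ (n + 1))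
    summable_bound (fun n ↦ by fun_prop) (isOpen_ball (x := (0 : ℂ)) (ε := r)) fun n w hw ↦ by
      rw [norm_mul, norm_pow, norm_natCast]
      gcongr
      · exact_mod_cast ArithmeticFunction.sigma_le_pow_succ 1 (n + 1)
      · exact (mem_ball_zero_iff.mp hw).le
  have hqr' : ball 0 r ∈ 𝓝 q := isOpen_ball.mem_nhds (mem_ball_zero_iff.mpr hqr)
  exact (((differentiableOn_tsum.differentiableAt hqr').const_mul 24).const_sub 1)
    |>.differentiableWithinAt

lemma eulerF_zero : eulerF 0 = 1 := by simp [eulerF]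

lemma differentiableOn_eulerF : DifferentiableOn ℂ eulerF (ball 0 1) :=
  differentiableOn_tprod_one_sub_pow

lemma eulerF_ne_zero {q : ℂ} (hq : ‖q‖ < 1) : eulerF q ≠ 0 := by
  have factor_ne_zero (n : ℕ) : 1 + -q ^ (n + 1) ≠ 0 := fun h ↦ by
    have norm_lt : ‖q ^ (n + 1)‖ < 1 := by
      simpa using pow_lt_one₀ (norm_nonneg q) hq n.succ_ne_zero
    rw [← add_neg_eq_zero.mp h] at norm_lt
    simp at norm_lt
  have summable_norm : Summable fun n : ℕ ↦ ‖-q ^ (n + 1)‖ := by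
    simpa using (summable_nat_add_iff 1).mpr (summable_geometric_of_lt_one (norm_nonneg q) hq)
  simpa [eulerF, sub_eq_add_neg] using
    tprod_one_add_ne_zero_of_summable factor_ne_zero summable_norm

lemma eulerF_pow_ne_zero {q : ℂ} (hq : ‖q‖ < 1) {n : ℕ} (hn : n ≠ 0) : eulerF (q ^ n) ≠ 0 :=
  eulerF_ne_zero (by simpa using pow_lt_one₀ (norm_nonneg q) hq hn)

lemma qParam_add (h : ℝ) (z w : ℂ) : 𝕢 h (z + w) = 𝕢 h z * 𝕢 h w := by
  simp only [Function.Periodic.qParam, ← exp_add]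
  ring_nf

lemma qParam_pow (h : ℝ) (z : ℂ) (n : ℕ) : 𝕢 h z ^ n = 𝕢 h (n * z) := by
  rw [Function.Periodic.qParam, ← exp_nat_mul, Function.Periodic.qParam]
  ring_nf

lemma qParam_one_div_two (z : ℂ) : 𝕢 1 (z / 2) = 𝕢 2 z := by
  simp only [Function.Periodic.qParam]
  push_cast
  ring_nf

lemma qParam_one_add_one (z : ℂ) : 𝕢 1 (z + 1) = 𝕢 1 z := by
  rw [qParam_add]
  simp [Function.Periodic.qParam]

lemma qParam_two_add_one (z : ℂ) : 𝕢 2 (z + 1) = -𝕢 2 z := by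
  have qParam_two_one : 𝕢 2 1 = -1 := by
    rw [← exp_pi_mul_I, Function.Periodic.qParam]
    push_cast
    ring_nf
  rw [qParam_add, qParam_two_one, mul_neg_one]

lemma qParam_two_sq (z : ℂ) : 𝕢 2 z ^ 2 = 𝕢 1 z := by
  rw [qParam_pow, ← qParam_one_div_two]
  simp

lemma qParam_two_pow_four (z : ℂ) : 𝕢 2 z ^ 4 = 𝕢 1 (2 * z) := by
  rw [qParam_pow, ← qParam_one_div_two]
  push_cast
  ring_nf

lemma inv_neg_eq_neg_one_div {R : Type*} [DivisionRing R] (a : R) : (-a)⁻¹ = -1 / a := by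
  rw [inv_neg, neg_div, one_div]

lemma im_neg_one_div_pos {z : ℂ} (hz : 0 < z.im) : 0 < (-1 / z).im := by
  simpa using im_pnat_div_pos 1 ⟨z, hz⟩

lemma eisensteinSeries_E2_eq_E2_qParam (τ : ℍ) : EisensteinSeries.E2 τ = E2 (𝕢 1 τ) := by
  rw [EisensteinSeries.E2_eq_tsum_cexp, E2, tsum_pnat_eq_tsum_succ (f := fun n ↦
    (ArithmeticFunction.sigma 1 n : ℂ) * cexp (2 * π * I * τ) ^ n)]
  simp [Function.Periodic.qParam]

lemma E2_qParam_neg_one_div {z : ℂ} (hz : 0 < z.im) :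
    E2 (𝕢 1 (-1 / z)) = z ^ 2 * E2 (𝕢 1 z) + 6 * z / (π * I) := by
  have slash_S := congrFun (EisensteinSeries.E2_slash_action ModularGroup.S) ⟨z, hz⟩
  rw [SlashInvariantForm.slash_S_apply] at slash_S
  simp only [Pi.sub_apply, Pi.smul_apply, EisensteinSeries.D2_S, eisensteinSeries_E2_eq_E2_qParam,
    riemannZeta_two, smul_eq_mul, zpow_neg, zpow_ofNat] at slash_S
  have hz0 : z ≠ 0 := UpperHalfPlane.ne_zero ⟨z, hz⟩
  rw [← inv_neg_eq_neg_one_div]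
  field_simp at slash_S ⊢
  linear_combination I * slash_S - 6 * z * I_sq

-- The factorization `S T⁻² S T⁻¹` of `!![1, -1; 2, -1]`, the matrix taking `(z + 1) / 2` to the
-- point `(-1 / z + 1) / 2`.
lemma exists_midpoint_factorization {z : ℂ} (hz : 0 < z.im) :
    ∃ u v : ℂ, 0 < u.im ∧ 0 < v.im ∧ (z + 1) / 2 = u + 1 ∧ -1 / u = v + 1 + 1 ∧
      (-1 / z + 1) / 2 = -1 / v ∧ u * v = -z := by
  have hz0 : z ≠ 0 := UpperHalfPlane.ne_zero ⟨z, hz⟩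
  have hz1 : z - 1 ≠ 0 := fun h ↦ by simp [sub_eq_zero.mp h] at hz
  have hu : 0 < ((z - 1) / 2).im := by simpa using hz
  have v_eq : -1 / ((z - 1) / 2) - 2 = -2 * z / (z - 1) := by field_simp; ring
  refine ⟨(z - 1) / 2, -1 / ((z - 1) / 2) - 2, hu, by simpa using im_neg_one_div_pos hu, by ring,
    by ring, ?_, ?_⟩
  · rw [v_eq]; field_simp; ring
  · rw [v_eq]; field_simp

lemma E2_qParam_neg_one_div_add_one_div_two {z : ℂ} (hz : 0 < z.im) :
    E2 (𝕢 1 ((-1 / z + 1) / 2)) = z ^ 2 * E2 (𝕢 1 ((z + 1) / 2)) + 12 * z / (π * I) := by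
  obtain ⟨u, v, hu, hv, z_eq, u_S, z_S, huv⟩ := exists_midpoint_factorization hz
  have E2_u := E2_qParam_neg_one_div hu
  rw [u_S, qParam_one_add_one, qParam_one_add_one] at E2_u
  rw [z_S, E2_qParam_neg_one_div hv, E2_u, z_eq, qParam_one_add_one]
  have weight_eq : (v * u) ^ 2 = z ^ 2 := by rw [mul_comm, huv, neg_sq]
  have defect_eq : v * (v * u + 1) = 2 * z := by linear_combination (v - 2) * huv - 2 * v * z_eq
  linear_combination E2 (𝕢 1 u) * weight_eq + 6 / (π * I) * defect_eq

lemma eta_eq_qParam_mul_eulerF (z : ℂ) : η z = 𝕢 24 z * eulerF (𝕢 1 z) :=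
  rfl

lemma eta_add_one (z : ℂ) : η (z + 1) = 𝕢 24 1 * η z := by
  rw [eta_eq_qParam_mul_eulerF, eta_eq_qParam_mul_eulerF, qParam_one_add_one, qParam_add]
  ring

lemma eta_neg_one_div_pow_four {z : ℂ} (hz : 0 < z.im) : η (-1 / z) ^ 4 = -z ^ 2 * η z ^ 4 := by
  have hz0 : z ≠ 0 := UpperHalfPlane.ne_zero ⟨z, hz⟩
  have sqrt_pow_four {x : ℂ} (hx : x ≠ 0) : sqrt x ^ 4 = x ^ 2 := by
    rw [sqrt_eq_exp hx, ← exp_nat_mul, show (4 : ℕ) * (log x / 2) = (2 : ℕ) * log x by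
      push_cast; ring, exp_nat_mul, exp_log hx]
  have eta_S : η (-1 / z) = (sqrt I)⁻¹ * (sqrt z * η z) := eta_comp_eq_csqrt_I_inv hz
  rw [eta_S, mul_pow, mul_pow, inv_pow, sqrt_pow_four I_ne_zero, sqrt_pow_four hz0, I_sq]
  ring

lemma eta_neg_one_div_pow_eight {z : ℂ} (hz : 0 < z.im) :
    η (-1 / z) ^ 8 = z ^ 4 * η z ^ 8 := by
  linear_combination (η (-1 / z) ^ 4 - z ^ 2 * η z ^ 4) * eta_neg_one_div_pow_four hz

lemma eta_neg_one_div_add_one_div_two_pow_eight {z : ℂ} (hz : 0 < z.im) :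
    η ((-1 / z + 1) / 2) ^ 8 = z ^ 4 * η ((z + 1) / 2) ^ 8 := by
  obtain ⟨u, v, hu, hv, z_eq, u_S, z_S, huv⟩ := exists_midpoint_factorization hz
  have eta_u := eta_neg_one_div_pow_eight hu
  have root_of_unity : (𝕢 24 1 ^ 8) ^ 3 = 1 := by
    rw [← pow_mul, Function.Periodic.qParam, ← exp_nat_mul]
    convert exp_two_pi_mul_I using 2
    push_cast
    ring
  rw [u_S, eta_add_one, eta_add_one] at eta_u
  rw [z_S, eta_neg_one_div_pow_eight hv, z_eq, eta_add_one]
  have weight_eq : (v * u) ^ 4 = z ^ 4 := by rw [mul_comm, huv, (by decide : Even 4).neg_pow]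
  linear_combination 𝕢 24 1 ^ 8 * v ^ 4 * eta_u + 𝕢 24 1 ^ 8 * η u ^ 8 * weight_eq -
    v ^ 4 * η v ^ 8 * root_of_unity

/-- The fourth power of the Jacobi theta function `θ₂` as a function of the nome `q = e^{πiτ}`,
given as the eta quotient `16 η(2τ)⁸ / η(τ)⁴`. -/
noncomputable def theta2PowFour (q : ℂ) : ℂ := 16 * q * eulerF (q ^ 4) ^ 8 / eulerF (q ^ 2) ^ 4

/-- The fourth power of the Jacobi theta function `θ₄` as a function of the nome `q = e^{πiτ}`,
given as the eta quotient `η(τ/2)⁸ / η(τ)⁴`. Its value at `-q` is the fourth power of `θ₃`. -/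
noncomputable def theta4PowFour (q : ℂ) : ℂ := eulerF q ^ 8 / eulerF (q ^ 2) ^ 4

lemma theta2PowFour_neg (q : ℂ) : theta2PowFour (-q) = -theta2PowFour q := by
  simp only [theta2PowFour, (by decide : Even 4).neg_pow, neg_sq]
  ring

lemma theta4PowFour_zero : theta4PowFour 0 = 1 := by simp [theta4PowFour, eulerF_zero]

lemma differentiableOn_theta2PowFour : DifferentiableOn ℂ theta2PowFour (ball 0 1) := by
  have numerator := differentiableOn_comp_pow differentiableOn_eulerF four_ne_zero
  have denominator := differentiableOn_comp_pow differentiableOn_eulerF two_ne_zero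
  exact ((differentiableOn_id.const_mul 16).mul (numerator.pow 8)).div (denominator.pow 4)
    fun _ hq ↦ pow_ne_zero 4 (eulerF_pow_ne_zero (mem_ball_zero_iff.mp hq) two_ne_zero)

lemma differentiableOn_theta4PowFour : DifferentiableOn ℂ theta4PowFour (ball 0 1) :=
  (differentiableOn_eulerF.pow 8).div
    ((differentiableOn_comp_pow differentiableOn_eulerF two_ne_zero).pow 4)
    fun _ hq ↦ pow_ne_zero 4 (eulerF_pow_ne_zero (mem_ball_zero_iff.mp hq) two_ne_zero)

lemma theta2PowFour_qParam_two (z : ℂ) :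
    theta2PowFour (𝕢 2 z) = 16 * η (2 * z) ^ 8 / η z ^ 4 := by
  have qParam_eq : 𝕢 24 (2 * z) ^ 8 = 𝕢 2 z * 𝕢 24 z ^ 4 := by
    rw [qParam_pow, qParam_pow]
    simp only [Function.Periodic.qParam, ← exp_add]
    push_cast
    ring_nf
  rw [theta2PowFour, eta_eq_qParam_mul_eulerF, eta_eq_qParam_mul_eulerF, qParam_two_sq,
    qParam_two_pow_four, mul_pow, mul_pow, qParam_eq]
  field_simp [Function.Periodic.qParam_ne_zero]

lemma theta4PowFour_qParam_two (z : ℂ) :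
    theta4PowFour (𝕢 2 z) = η (z / 2) ^ 8 / η z ^ 4 := by
  have qParam_eq : 𝕢 24 (z / 2) ^ 8 = 𝕢 24 z ^ 4 := by
    rw [qParam_pow, qParam_pow]
    push_cast
    ring_nf
  rw [theta4PowFour, eta_eq_qParam_mul_eulerF, eta_eq_qParam_mul_eulerF, qParam_two_sq,
    qParam_one_div_two, mul_pow, mul_pow, qParam_eq]
  field_simp [Function.Periodic.qParam_ne_zero]

lemma theta2PowFour_qParam_two_neg_one_div {z : ℂ} (hz : 0 < z.im) :
    theta2PowFour (𝕢 2 (-1 / z)) = -z ^ 2 * theta4PowFour (𝕢 2 z) := by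
  have hz2 : 0 < (z / 2).im := by simpa using hz
  have hz0 : z ≠ 0 := UpperHalfPlane.ne_zero ⟨z, hz⟩
  rw [theta2PowFour_qParam_two, theta4PowFour_qParam_two, show 2 * (-1 / z) = -1 / (z / 2) by
    field_simp, eta_neg_one_div_pow_eight hz2, eta_neg_one_div_pow_four hz]
  field_simp
  norm_num

lemma theta4PowFour_neg_qParam_two_neg_one_div {z : ℂ} (hz : 0 < z.im) :
    theta4PowFour (-𝕢 2 (-1 / z)) = -z ^ 2 * theta4PowFour (-𝕢 2 z) := by
  rw [← qParam_two_add_one, ← qParam_two_add_one, theta4PowFour_qParam_two,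
    theta4PowFour_qParam_two, eta_neg_one_div_add_one_div_two_pow_eight hz, eta_add_one,
    eta_add_one, mul_pow, mul_pow, eta_neg_one_div_pow_four hz]
  field_simp

lemma mdifferentiable_comp_qParam {h : ℝ} (hh : 0 < h) {g : ℂ → ℂ}
    (hg : DifferentiableOn ℂ g (ball 0 1)) : MDiff fun τ : ℍ ↦ g (𝕢 h τ) := by
  rw [UpperHalfPlane.mdifferentiable_iff]
  refine (hg.comp Function.Periodic.differentiable_qParam.differentiableOn fun z hz ↦
    mem_ball_zero_iff.mpr (Function.Periodic.norm_qParam_lt_one hh hz)).congr fun z hz ↦ ?_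
  simp [ofComplex_apply_of_im_pos hz]

lemma slash_T_comp_qParam_two {g : ℂ → ℂ} (k : ℤ) (g_neg : ∀ q, g (-q) = g q) :
    (fun τ : ℍ ↦ g (𝕢 2 τ)) ∣[k] ModularGroup.T = fun τ : ℍ ↦ g (𝕢 2 τ) := by
  ext τ
  rw [SL_slash_apply, ModularGroup.denom_apply, modular_T_smul]
  simp [add_comm (1 : ℂ), qParam_two_add_one, g_neg, ModularGroup.T]

lemma slash_S_comp_qParam_two {g : ℂ → ℂ} {k : ℤ}
    (g_S : ∀ τ : ℍ, g (𝕢 2 (-1 / τ)) = (τ : ℂ) ^ k * g (𝕢 2 τ)) :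
    (fun τ : ℍ ↦ g (𝕢 2 τ)) ∣[k] ModularGroup.S = fun τ : ℍ ↦ g (𝕢 2 τ) := by
  ext τ
  rw [SlashInvariantForm.slash_S_apply]
  simp only [inv_neg_eq_neg_one_div]
  rw [g_S, mul_right_comm, ← zpow_add₀ τ.ne_zero]
  simp

theorem eq_zero_of_levelOne_of_weight_lt_twelve {k : ℤ} (hk : k < 12) {g : ℂ → ℂ}
    (hg : DifferentiableOn ℂ g (ball 0 1)) (g_zero : g 0 = 0) (g_neg : ∀ q, g (-q) = g q)
    (g_S : ∀ τ : ℍ, g (𝕢 2 (-1 / τ)) = (τ : ℂ) ^ k * g (𝕢 2 τ)) {q : ℂ} (hq : ‖q‖ < 1) :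
    g q = 0 := by
  have slash_eq (γ : SL(2, ℤ)) : (fun τ : ℍ ↦ g (𝕢 2 τ)) ∣[k] γ = fun τ : ℍ ↦ g (𝕢 2 τ) :=
    SlashInvariantForm.slash_action_generators_SL2Z (slash_S_comp_qParam_two g_S)
      (slash_T_comp_qParam_two k g_neg) γ
  have isZeroAtImInfty : IsZeroAtImInfty fun τ : ℍ ↦ g (𝕢 2 τ) := by
    have g_tendsto : Tendsto g (𝓝 0) (𝓝 0) := by
      simpa only [g_zero] using
        (hg.differentiableAt (ball_mem_nhds 0 one_pos)).continuousAt.tendsto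
    exact g_tendsto.comp (qParam_tendsto_atImInfty two_pos)
  let G : CuspForm 𝒮ℒ k :=
    { toFun τ := g (𝕢 2 τ)
      slash_action_eq' := by
        rintro _ ⟨γ, rfl⟩
        exact slash_eq γ
      holo' := mdifferentiable_comp_qParam two_pos hg
      zero_at_cusps' := fun {c} hc ↦ by
        rw [Subgroup.IsArithmetic.isCusp_iff_isCusp_SL2Z] at hc
        rw [OnePoint.isZeroAt_iff_forall_SL2Z hc]
        intro γ _
        rw [slash_eq]
        exact isZeroAtImInfty }
  rcases eq_or_ne q 0 with rfl | hq0
  · exact g_zero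
  let τ : ℍ := ⟨_, Function.Periodic.im_invQParam_pos_of_norm_lt_one two_pos hq hq0⟩
  have qParam_τ : 𝕢 2 τ = q := Function.Periodic.qParam_right_inv two_ne_zero hq0
  rw [← qParam_τ]
  have G_eq_zero : G = 0 :=
    rank_zero_iff_forall_zero.mp (CuspForm.rank_eq_zero_of_weight_lt_twelve hk) G
  exact DFunLike.congr_fun G_eq_zero τ

lemma eq_zero_of_sum_eq_zero_of_sum_sq_eq_zero {K : Type*} [Field K] [CharZero K] {x y z : K}
    (sum : x + y + z = 0) (sum_sq : x ^ 2 + y ^ 2 + z ^ 2 = 0)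
    (discr : (x - y) * (y - z) * (z - x) = 0) : x = 0 := by
  have hz : z = -x - y := by linear_combination sum
  subst hz
  have six_sq : 6 * x ^ 2 = 0 := by
    rcases mul_eq_zero.mp discr with h | h
    · rcases mul_eq_zero.mp h with h | h
      · linear_combination sum_sq + (4 * x + 2 * y) * h
      · linear_combination 4 * sum_sq - (2 * x + 4 * y) * h
    · linear_combination sum_sq + (2 * y - 2 * x) * h
  simpa using six_sq

theorem eq_zero_of_weight_two_of_permuted {f g h : ℂ → ℂ}
    (hf : DifferentiableOn ℂ f (ball 0 1)) (hg : DifferentiableOn ℂ g (ball 0 1))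
    (g_zero : g 0 = 0) (f_neg : ∀ q, f (-q) = -f q) (g_neg : ∀ q, g (-q) = -h q)
    (f_S : ∀ τ : ℍ, f (𝕢 2 (-1 / τ)) = -(τ : ℂ) ^ 2 * g (𝕢 2 τ))
    (h_S : ∀ τ : ℍ, h (𝕢 2 (-1 / τ)) = -(τ : ℂ) ^ 2 * h (𝕢 2 τ))
    {q : ℂ} (hq : ‖q‖ < 1) : f q = 0 := by
  have h_eq (q : ℂ) : h q = -g (-q) := by rw [g_neg, neg_neg]
  have h_neg (q : ℂ) : h (-q) = -g q := by rw [h_eq, neg_neg]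
  have hh : DifferentiableOn ℂ h (ball 0 1) :=
    (differentiableOn_comp_neg hg).neg.congr fun q _ ↦ h_eq q
  have f_zero : f 0 = 0 := by simpa [self_eq_neg] using f_neg 0
  have h_zero : h 0 = 0 := by simp [h_eq, g_zero]
  have g_S (τ : ℍ) : g (𝕢 2 (-1 / τ)) = -(τ : ℂ) ^ 2 * f (𝕢 2 τ) := by
    have f_S' := f_S (.mk _ τ.im_inv_neg_coe_pos)
    have τ_eq : -1 / (-1 / (τ : ℂ)) = τ := by field_simp
    simp only [inv_neg_eq_neg_one_div, τ_eq] at f_S'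
    rw [f_S']
    field_simp [τ.ne_zero]
  have sum_sq : f q ^ 2 + g q ^ 2 + h q ^ 2 = 0 := by
    refine eq_zero_of_levelOne_of_weight_lt_twelve (k := 4) (by norm_num)
      (g := fun q ↦ f q ^ 2 + g q ^ 2 + h q ^ 2) (by fun_prop)
      (by simp [f_zero, g_zero, h_zero]) (fun q ↦ ?_) (fun τ ↦ ?_) hq
    · simp only [f_neg, g_neg, h_neg]
      ring
    · simp only [f_S, g_S, h_S, zpow_ofNat]
      ring
  have sum : f q + g q + h q = 0 := by
    refine pow_eq_zero_iff two_ne_zero |>.mp <|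
      eq_zero_of_levelOne_of_weight_lt_twelve (k := 4) (by norm_num)
      (g := fun q ↦ (f q + g q + h q) ^ 2) (by fun_prop)
      (by simp [f_zero, g_zero, h_zero]) (fun q ↦ ?_) (fun τ ↦ ?_) hq
    · simp only [f_neg, g_neg, h_neg]
      ring
    · simp only [f_S, g_S, h_S, zpow_ofNat]
      ring
  have discr : (f q - g q) * (g q - h q) * (h q - f q) = 0 := by
    refine eq_zero_of_levelOne_of_weight_lt_twelve (k := 6) (by norm_num)
      (g := fun q ↦ (f q - g q) * (g q - h q) * (h q - f q)) (by fun_prop)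
      (by simp [f_zero, g_zero, h_zero]) (fun q ↦ ?_) (fun τ ↦ ?_) hq
    · simp only [f_neg, g_neg, h_neg]
      ring
    · simp only [f_S, g_S, h_S, zpow_ofNat]
      ring
  exact eq_zero_of_sum_eq_zero_of_sum_sq_eq_zero sum sum_sq discr

lemma E2_qParam_two_neg_one_div {z : ℂ} (hz : 0 < z.im) :
    E2 (𝕢 2 (-1 / z)) = 4 * z ^ 2 * E2 (𝕢 2 z ^ 4) + 12 * z / (π * I) := by
  have E2_S := E2_qParam_neg_one_div (z := 2 * z) (by simpa using hz)
  rw [← div_div, div_right_comm, qParam_one_div_two, ← qParam_two_pow_four] at E2_S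
  linear_combination E2_S

lemma E2_neg_qParam_two_neg_one_div {z : ℂ} (hz : 0 < z.im) :
    E2 (-𝕢 2 (-1 / z)) = z ^ 2 * E2 (-𝕢 2 z) + 12 * z / (π * I) := by
  simpa only [qParam_one_div_two, qParam_two_add_one] using E2_qParam_neg_one_div_add_one_div_two hz

lemma E2_qParam_two_neg_one_div_sq {z : ℂ} (hz : 0 < z.im) :
    E2 (𝕢 2 (-1 / z) ^ 2) = z ^ 2 * E2 (𝕢 2 z ^ 2) + 6 * z / (π * I) := by
  simpa only [qParam_two_sq] using E2_qParam_neg_one_div hz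

lemma E2_qParam_two_neg_one_div_pow_four {z : ℂ} (hz : 0 < z.im) :
    E2 (𝕢 2 (-1 / z) ^ 4) = z ^ 2 / 4 * E2 (𝕢 2 z) + 3 * z / (π * I) := by
  have E2_S := E2_qParam_neg_one_div (z := z / 2) (by simpa using hz)
  rw [← div_mul, div_mul_eq_mul_div, mul_comm _ (2 : ℂ), mul_div_assoc, ← qParam_two_pow_four,
    qParam_one_div_two] at E2_S
  linear_combination E2_S

theorem E2_add_E2_neg_add_four_mul_E2_pow_four {q : ℂ} (hq : ‖q‖ < 1) :
    E2 q + E2 (-q) + 4 * E2 (q ^ 4) = 6 * E2 (q ^ 2) := by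
  have hE2 := differentiableOn_E2
  have hE2_neg := differentiableOn_comp_neg differentiableOn_E2
  have hE2_sq := differentiableOn_comp_pow differentiableOn_E2 two_ne_zero
  have hE2_pow_four := differentiableOn_comp_pow differentiableOn_E2 four_ne_zero
  refine sub_eq_zero.mp <| eq_zero_of_levelOne_of_weight_lt_twelve (k := 2) (by norm_num)
    (g := fun q ↦ E2 q + E2 (-q) + 4 * E2 (q ^ 4) - 6 * E2 (q ^ 2)) (by fun_prop)
    (by norm_num [E2_zero]) (fun q ↦ ?_) (fun τ ↦ ?_) hq
  · simp only [neg_neg, neg_sq, (by decide : Even 4).neg_pow]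
    ring
  · simp only [E2_qParam_two_neg_one_div τ.im_pos, E2_neg_qParam_two_neg_one_div τ.im_pos,
      E2_qParam_two_neg_one_div_sq τ.im_pos, E2_qParam_two_neg_one_div_pow_four τ.im_pos,
      zpow_ofNat]
    ring

theorem E2_neg_sub_E2 {q : ℂ} (hq : ‖q‖ < 1) : E2 (-q) - E2 q = 3 * theta2PowFour q := by
  have hE2 := differentiableOn_E2
  have hE2_neg := differentiableOn_comp_neg differentiableOn_E2
  have hE2_pow_four := differentiableOn_comp_pow differentiableOn_E2 four_ne_zero
  have hθ₂ := differentiableOn_theta2PowFour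
  have hθ₄ := differentiableOn_theta4PowFour
  refine sub_eq_zero.mp <| eq_zero_of_weight_two_of_permuted
    (f := fun q ↦ E2 (-q) - E2 q - 3 * theta2PowFour q)
    (g := fun q ↦ 4 * E2 (q ^ 4) - E2 (-q) - 3 * theta4PowFour q)
    (h := fun q ↦ E2 q - 4 * E2 (q ^ 4) + 3 * theta4PowFour (-q))
    (by fun_prop) (by fun_prop) (by norm_num [E2_zero, theta4PowFour_zero])
    (fun q ↦ ?_) (fun q ↦ ?_) (fun τ ↦ ?_) (fun τ ↦ ?_) hq
  · simp only [neg_neg, theta2PowFour_neg]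
    ring
  · simp only [neg_neg, (by decide : Even 4).neg_pow]
    ring
  · simp only [E2_qParam_two_neg_one_div τ.im_pos, E2_neg_qParam_two_neg_one_div τ.im_pos,
      theta2PowFour_qParam_two_neg_one_div τ.im_pos]
    ring
  · simp only [E2_qParam_two_neg_one_div τ.im_pos, E2_qParam_two_neg_one_div_pow_four τ.im_pos,
      theta4PowFour_neg_qParam_two_neg_one_div τ.im_pos]
    ring

/-- `3E₂(q²) − E₂(q) − 2E₂(q⁴) = 24 q F(q⁴)⁸/F(q²)⁴`, i.e. `= 24 η(q⁴)⁸/η(q²)⁴`. -/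
theorem eisenstein_eta_identity (q : ℂ) (hq : ‖q‖ < 1) :
    3 * E2 (q ^ 2) - E2 q - 2 * E2 (q ^ 4)
      = 24 * q * eulerF (q ^ 4) ^ 8 / eulerF (q ^ 2) ^ 4 := by
  have theta_eq : 24 * q * eulerF (q ^ 4) ^ 8 / eulerF (q ^ 2) ^ 4 = 3 / 2 * theta2PowFour q := by
    rw [theta2PowFour]
    ring
  rw [theta_eq]
  linear_combination (E2_neg_sub_E2 hq - E2_add_E2_neg_add_four_mul_E2_pow_four hq) / 2
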